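/- For every σ > 0 and every α ∈ ℝ, 0 ≤ Φ(α/σ)·α + φ(α/σ)·σ − max{0, α} ≤ σ/√(2π); consequently the smooth ReLU ψ_sReLU(α;σ) = Φ(α/σ)α + φ(α/σ)σ converges to the ReLU function max{0,α} uniformly in α as σ → 0⁺. -/

import Mathlib

open Real Set

/-- The probability density function of the standard normal distribution. -/
noncomputable def stdGaussPDF (v : ℝ) : ℝ :=
  (1 / Real.sqrt (2 * Real.pi)) * Real.exp (-v ^ 2 / 2)

/-- The cumulative distribution function of the standard normal distribution. -/
noncomputable def stdGaussCDF (v : ℝ) : ℝ :=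
  ∫ t in Set.Iic v, stdGaussPDF t

/-- The smooth ReLU ψ_sReLU(α;σ) = Φ(α/σ)α + φ(α/σ)σ. -/
noncomputable def smoothReLU (σ α : ℝ) : ℝ :=
  stdGaussCDF (α / σ) * α + stdGaussPDF (α / σ) * σ

open MeasureTheory in
lemma aux_int : Integrable stdGaussPDF := by
  have h := (integrable_exp_neg_mul_sq (b := 1/2) (by norm_num)).const_mul (1 / Real.sqrt (2 * Real.pi))
  refine h.congr (Filter.Eventually.of_forall fun x => ?_)
  simp only [stdGaussPDF]
  congr 2; ring

open MeasureTheory in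
lemma aux_int2 : Integrable (fun t => -t * stdGaussPDF t) := by
  have h := (integrable_mul_exp_neg_mul_sq (b := 1/2) (by norm_num)).const_mul (-(1 / Real.sqrt (2 * Real.pi)))
  refine h.congr (Filter.Eventually.of_forall fun x => ?_)
  simp only [stdGaussPDF]
  rw [show -x ^ 2 / 2 = -(1/2) * x^2 by ring]; ring

open MeasureTheory in
lemma aux_total : ∫ t, stdGaussPDF t = 1 := by
  have h := integral_gaussian (1/2)
  simp only [stdGaussPDF]
  rw [integral_const_mul]
  have : (fun x : ℝ => Real.exp (-x ^ 2 / 2)) = fun x => Real.exp (-(1/2) * x^2) := by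
    ext x; congr 1; ring
  rw [this, h, show π / (1/2) = 2 * π by ring]
  have : 0 < √(2 * π) := by positivity
  field_simp

lemma aux_even (v : ℝ) : stdGaussPDF (-v) = stdGaussPDF v := by simp [stdGaussPDF]

lemma aux_pos (v : ℝ) : 0 ≤ stdGaussPDF v := by unfold stdGaussPDF; positivity

lemma aux_le (v : ℝ) : stdGaussPDF v ≤ 1 / √(2 * π) := by
  unfold stdGaussPDF
  refine mul_le_of_le_one_right (by positivity) ?_
  rw [Real.exp_le_one_iff]
  nlinarith [sq_nonneg v]

lemma aux_deriv (t : ℝ) : HasDerivAt stdGaussPDF (-t * stdGaussPDF t) t := by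
  have h1 : HasDerivAt (fun t : ℝ => -t ^ 2 / 2) (-t) t := by
    have := ((hasDerivAt_pow 2 t).neg).div_const 2
    have e : -(((2 : ℕ) : ℝ) * t ^ (2 - 1)) / 2 = -t := by norm_num; ring
    rw [e] at this
    exact this
  have := (h1.exp).const_mul (1 / √(2 * π))
  have e : 1 / √(2 * π) * (Real.exp (-t ^ 2 / 2) * -t) = -t * stdGaussPDF t := by
    simp only [stdGaussPDF]; ring
  rw [e] at this
  exact this

open MeasureTheory in
lemma aux_mom (v : ℝ) : ∫ t in Set.Iic v, -t * stdGaussPDF t = stdGaussPDF v := by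
  have hl := tendsto_zero_of_hasDerivAt_of_integrableOn_Iic (a := v) (fun x _ => aux_deriv x)
    aux_int2.integrableOn aux_int.integrableOn
  rw [integral_Iic_of_hasDerivAt_of_tendsto' (fun x _ => aux_deriv x) aux_int2.integrableOn hl, sub_zero]

open MeasureTheory in
lemma aux_symm (v : ℝ) : stdGaussCDF (-v) = 1 - stdGaussCDF v := by
  have h := integral_comp_neg_Iic (-v) stdGaussPDF
  simp only [aux_even, neg_neg] at h
  have h2 := intervalIntegral.integral_Iic_add_Ioi (b := v) aux_int.integrableOn aux_int.integrableOn
  rw [aux_total] at h2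
  simp only [stdGaussCDF]
  linarith

open MeasureTheory in
lemma aux_g (v : ℝ) : 0 ≤ stdGaussCDF v * v + stdGaussPDF v := by
  have : stdGaussCDF v * v + stdGaussPDF v
      = ∫ t in Set.Iic v, (stdGaussPDF t * v + -t * stdGaussPDF t) := by
    rw [integral_add (aux_int.mul_const v).integrableOn aux_int2.integrableOn, aux_mom,
      integral_mul_const, stdGaussCDF]
  rw [this]
  refine setIntegral_nonneg measurableSet_Iic fun t ht => ?_
  have ht : t ≤ v := ht
  nlinarith [aux_pos t]

lemma aux_cdf (v : ℝ) : 0 ≤ stdGaussCDF v :=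
  MeasureTheory.integral_nonneg fun t => aux_pos t

lemma aux_main (v : ℝ) : 0 ≤ stdGaussCDF v * v + stdGaussPDF v - max 0 v ∧
    stdGaussCDF v * v + stdGaussPDF v - max 0 v ≤ 1 / √(2 * π) := by
  rcases le_total v 0 with h | h
  · rw [max_eq_left h]
    have := aux_g v
    have := mul_nonpos_of_nonneg_of_nonpos (aux_cdf v) h
    have := aux_le v
    constructor <;> linarith
  · rw [max_eq_right h]
    have h1 := aux_g (-v)
    have h2 := mul_nonneg (aux_cdf (-v)) h
    have := aux_le v
    rw [aux_symm] at h1 h2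
    rw [aux_even] at h1
    constructor <;> nlinarith

lemma aux_fin (σ : ℝ) (hσ : 0 < σ) (α : ℝ) :
      0 ≤ smoothReLU σ α - max 0 α ∧
      smoothReLU σ α - max 0 α ≤ σ / Real.sqrt (2 * Real.pi) := by
  obtain ⟨v, rfl⟩ : ∃ v, α = σ * v := ⟨α / σ, by field_simp⟩
  have hm : max 0 (σ * v) = σ * max 0 v := by
    rw [mul_max_of_nonneg _ _ hσ.le, mul_zero]
  have hv : σ * v / σ = v := by field_simp
  have e : smoothReLU σ (σ * v) - max 0 (σ * v)
      = σ * (stdGaussCDF v * v + stdGaussPDF v - max 0 v) := by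
    rw [hm, smoothReLU, hv]; ring
  obtain ⟨h1, h2⟩ := aux_main v
  rw [e]
  refine ⟨mul_nonneg hσ.le h1, ?_⟩
  rw [div_eq_mul_one_div]
  exact mul_le_mul_of_nonneg_left h2 hσ.le

theorem stmt_18 :
    (∀ σ : ℝ, 0 < σ → ∀ α : ℝ,
      0 ≤ smoothReLU σ α - max 0 α ∧
      smoothReLU σ α - max 0 α ≤ σ / Real.sqrt (2 * Real.pi)) ∧
    (∀ ε : ℝ, 0 < ε → ∃ δ : ℝ, 0 < δ ∧
      ∀ σ : ℝ, 0 < σ → σ < δ → ∀ α : ℝ, |smoothReLU σ α - max 0 α| < ε) := by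
  refine ⟨aux_fin, fun ε hε => ⟨ε * √(2 * π), by positivity, fun σ hσ hd α => ?_⟩⟩
  obtain ⟨h1, h2⟩ := aux_fin σ hσ α
  rw [abs_of_nonneg h1]
  refine h2.trans_lt ?_
  rwa [div_lt_iff₀ (by positivity)]
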